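/- arXiv:1912.01994 — 3 statements merged into one kernel-verified Lean document; each statement's English description precedes it below -/
import Mathlib

section
/- Let h : ℕ_τ → ℕ_τ be a homeomorphism of the Golomb space and p a prime number. For every a ∈ ℕ with a ≠ 1 and p ∤ a, the image under h of the closure of a^ℕ in the p-adic topology on ℕ \ pℕ equals the closure of h(a)^ℕ in the h(p)-adic topology on ℕ \ h(p)ℕ. Consequently the map X ↦ h(X) is an order isomorphism of the poset 𝒳_p onto the poset 𝒳_{h(p)}. -/
/-!
A point `w` lies in the closure of `x + bℕ₀` iff `p ∣ w` or `w ≡ x [MOD p ^ k]` for every prime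
power `p ^ k` dividing `b`. Hence the filters `clNhds x` generated by the closed neighbourhoods of
`x`, which a homeomorphism `h` permutes, record two kinds of arithmetic.

* Distinct `x` and `y` are coprime iff, for some `z`, the infimum of `clNhds x`, `clNhds y` and
  `clNhds z` is the smallest possible. So `h` preserves coprimality and fixes `1`, and for every
  prime `q` there is a prime `q'` with `q ∣ x` iff `q' ∣ h x`; in particular `h` maps the powers of
  `q` onto the powers of `q'`.
* For `q ∤ x`, along numbers divisible by more and more primes other than `q` but not by `q`, the
  filter `clNhds x` is that of `q`-adic neighbourhoods. So away from `q` the map `h` is continuous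
  from the `q`-adic to the `q'`-adic topology, and carries `q`-adic closures to `q'`-adic closures.

For `a > 1` the `q`-adic closure of `a^ℕ` consists of cosets of `1 + q ^ s ℤ_q` for some `s`, so it
does not change when `a` moves a little. As primes are `q`-adically dense by Dirichlet's theorem,
the images of the closures of prime powers determine the images of all closures of powers. Finally,
if `p'` is matched with `p`, then `p' ∣ h p`, and `p'` lies in the `q'`-adic closure of the powers
of `h p` for every prime `q' ∤ h p`; therefore `p' ≡ 1 [MOD h p - 1]`, which forces `p' = h p`.
-/

open TopologicalSpace

/-- The arithmetic progression `a + bℕ₀ = {a + b*n : n ≥ 0}` inside the positive integers. -/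
def golombBasic (a b : ℕ) : Set ℕ+ := {x : ℕ+ | ∃ n : ℕ, (x : ℕ) = a + b * n}

/-- The Golomb topology on the positive integers, generated by the arithmetic
progressions `a + bℕ₀` with coprime `a, b ∈ ℕ`. -/
instance golombTopology : TopologicalSpace ℕ+ :=
  generateFrom {S : Set ℕ+ | ∃ a b : ℕ, 0 < a ∧ 0 < b ∧ Nat.Coprime a b ∧ S = golombBasic a b}

/-- The positive integers not divisible by `p` (the set `ℕ \ pℕ`). -/
abbrev Np (p : ℕ) : Type := {x : ℕ+ // ¬ p ∣ (x : ℕ)}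

/-- The `p`-adic topology on `ℕ \ pℕ`, generated by the traces of the sets
`x + p^nℕ₀`, `x, n ∈ ℕ`. -/
def padicTop (p : ℕ) : TopologicalSpace (Np p) :=
  generateFrom {S : Set (Np p) | ∃ x n : ℕ, 0 < x ∧ 0 < n ∧
    S = {y : Np p | ∃ k : ℕ, ((y : ℕ+) : ℕ) = x + p ^ n * k}}

/-- Closure of a set of positive integers in the `p`-adic topology on `ℕ \ pℕ`,
viewed again as a set of positive integers. -/
def padicClosure (p : ℕ) (A : Set ℕ+) : Set ℕ+ :=
  Subtype.val '' (@closure (Np p) (padicTop p) (Subtype.val ⁻¹' A))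

/-- `a^ℕ = {a^k : k ∈ ℕ}`, the set of positive powers of `a`. -/
def powSet (a : ℕ) : Set ℕ+ := {y : ℕ+ | ∃ k : ℕ, 0 < k ∧ (y : ℕ) = a ^ k}

/-- The closure of `a^ℕ` in the `p`-adic topology on `ℕ \ pℕ`. -/
def clPow (p a : ℕ) : Set ℕ+ := padicClosure p (powSet a)

/-- The family `𝒳_p` of closures of the sets `a^ℕ` for `a ∈ ℕ \ pℕ`, `a ≠ 1`. -/
def XX (p : ℕ) : Set (Set ℕ+) := {X | ∃ a : ℕ, 0 < a ∧ a ≠ 1 ∧ ¬ p ∣ a ∧ X = clPow p a}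

/-- The projection `π_n(X)` of a set of positive integers to `ℤ/p^nℤ`. -/
def pin (p n : ℕ) (X : Set ℕ+) : Set (ZMod (p ^ n)) :=
  (fun y : ℕ+ => ((y : ℕ) : ZMod (p ^ n))) '' X

/-- `n(X)`: the least `n ∈ ℕ` with `X = ℕ ∩ π_n⁻¹(π_n(X))` and `|π_n(X)| ≥ max(p,3)`. -/
noncomputable def nX (p : ℕ) (X : Set ℕ+) : ℕ :=
  sInf {n : ℕ | 0 < n ∧ X = {y : ℕ+ | ((y : ℕ) : ZMod (p ^ n)) ∈ pin p n X} ∧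
    max p 3 ≤ (pin p n X).ncard}

/-- `i(X)`: the index of the subgroup `π_{n(X)}(X)` in the group of units of `ℤ/p^{n(X)}ℤ`. -/
noncomputable def iX (p : ℕ) (X : Set ℕ+) : ℕ :=
  Nat.card ((ZMod (p ^ nX p X))ˣ) / (pin p (nX p X) X).ncard

namespace GolombSpace

open Filter Topology

theorem modEq_iff_forall_prime_pow {a b n : ℕ} :
    a ≡ b [MOD n] ↔ ∀ p k : ℕ, p.Prime → p ^ k ∣ n → a ≡ b [MOD p ^ k] := by
  simp only [Nat.modEq_iff_dvd, Int.natCast_dvd]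
  exact Nat.dvd_iff_prime_pow_dvd_dvd _ _

/-! ### Arithmetic progressions and their closures -/

theorem mem_golombBasic {a b : ℕ} {x : ℕ+} :
    x ∈ golombBasic a b ↔ a ≤ x ∧ (x : ℕ) ≡ a [MOD b] := by
  constructor
  · rintro ⟨n, hn⟩
    simp [hn, Nat.ModEq]
  · rintro ⟨hax, hx⟩
    obtain ⟨n, hn⟩ := (Nat.modEq_iff_dvd' hax).1 hx.symm
    exact ⟨n, by omega⟩

theorem golombBasic_inter_nonempty_iff {a b c d : ℕ} (hb : 0 < b) (hd : 0 < d) :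
    (golombBasic a b ∩ golombBasic c d).Nonempty ↔ a ≡ c [MOD b.gcd d] := by
  simp only [Set.Nonempty, Set.mem_inter_iff, mem_golombBasic]
  constructor
  · rintro ⟨x, ⟨-, hxa⟩, -, hxc⟩
    exact (hxa.of_dvd (b.gcd_dvd_left d)).symm.trans (hxc.of_dvd (b.gcd_dvd_right d))
  · intro h
    obtain ⟨m, hma, hmc⟩ := Nat.chineseRemainder' h
    -- the shift makes the solution larger than both starting points
    have hlarge : a + c + 1 ≤ m + b * d * (a + c + 1) :=
      (Nat.le_mul_of_pos_left _ (Nat.mul_pos hb hd)).trans (Nat.le_add_left _ _)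
    refine ⟨⟨m + b * d * (a + c + 1), by omega⟩, ⟨?_, ?_⟩, ?_, ?_⟩
    · rw [PNat.mk_coe]; omega
    · simpa [Nat.ModEq, mul_assoc] using hma
    · rw [PNat.mk_coe]; omega
    · simpa [Nat.ModEq, mul_comm b d, mul_assoc] using hmc

theorem nhds_eq_biInf_golombBasic (x : ℕ+) :
    𝓝 x = ⨅ b ∈ {b : ℕ | 0 < b ∧ Nat.Coprime x b}, 𝓟 (golombBasic x b) := by
  rw [nhds_generateFrom]
  apply le_antisymm
  · exact le_iInf₂ fun b hb => iInf₂_le_of_le (golombBasic x b)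
      ⟨mem_golombBasic.2 ⟨le_rfl, rfl⟩, x, b, x.pos, hb.1, hb.2, rfl⟩ le_rfl
  · refine le_iInf₂ ?_
    rintro _ ⟨hx, a, b, -, hb, hab, rfl⟩
    obtain ⟨hax, hxa⟩ := mem_golombBasic.1 hx
    refine iInf₂_le_of_le b ⟨hb, ?_⟩ (principal_mono.2 fun y hy => ?_)
    · rwa [Nat.Coprime, hxa.gcd_eq]
    · obtain ⟨hxy, hyx⟩ := mem_golombBasic.1 hy
      exact mem_golombBasic.2 ⟨hax.trans hxy, hyx.trans hxa⟩

theorem hasBasis_nhds_golombBasic (x : ℕ+) :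
    (𝓝 x).HasBasis (fun b : ℕ => 0 < b ∧ Nat.Coprime x b) (golombBasic x) := by
  rw [nhds_eq_biInf_golombBasic]
  refine hasBasis_biInf_principal (fun b hb c hc => ?_) ⟨1, one_pos, Nat.coprime_one_right _⟩
  have hsub {d : ℕ} (hd : d ∣ b * c) : golombBasic x (b * c) ⊆ golombBasic x d := fun y hy =>
    mem_golombBasic.2 ((mem_golombBasic.1 hy).imp_right (Nat.ModEq.of_dvd hd))
  exact ⟨b * c, ⟨Nat.mul_pos hb.1 hc.1, hb.2.mul_right hc.2⟩,
    hsub (Dvd.intro _ rfl), hsub (Dvd.intro_left _ rfl)⟩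

/-- The numbers divisible by `p`. -/
def multiples (p : ℕ) : Set ℕ+ := {w | p ∣ (w : ℕ)}

/-- The residue class of `x` modulo `q ^ k`, which is a ball of the `q`-adic metric. -/
def adicBall (q k : ℕ) (x : ℕ+) : Set ℕ+ := {w | (w : ℕ) ≡ x [MOD q ^ k]}

theorem adicBall_eq_of_mem {q k : ℕ} {x a : ℕ+} (ha : a ∈ adicBall q k x) :
    adicBall q k a = adicBall q k x :=
  Set.ext fun _ => ⟨fun hw => hw.trans ha, fun hw => hw.trans ha.symm⟩

theorem adicBall_antitone (q : ℕ) (x : ℕ+) : Antitone fun k => adicBall q k x :=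
  fun _ _ hjk _ hw => hw.of_dvd (pow_dvd_pow q hjk)

theorem mem_closure_golombBasic {x w : ℕ+} {b : ℕ} (hb : 0 < b) :
    w ∈ closure (golombBasic x b) ↔
      ∀ p k : ℕ, p.Prime → p ^ k ∣ b → w ∈ multiples p ∪ adicBall p k x := by
  have hinter : w ∈ closure (golombBasic x b) ↔
      ∀ c : ℕ, 0 < c → Nat.Coprime w c → (w : ℕ) ≡ x [MOD b.gcd c] := by
    rw [mem_closure_iff_nhds_basis (hasBasis_nhds_golombBasic w)]
    refine forall_congr' fun c => and_imp.trans (forall₂_congr fun hc _ => ?_)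
    exact (golombBasic_inter_nonempty_iff hb hc).trans Nat.ModEq.comm
  rw [hinter]
  constructor
  · intro h p k hp hpk
    refine or_iff_not_imp_left.2 fun hpw => ?_
    have hcop : Nat.Coprime w (p ^ k) := ((hp.coprime_iff_not_dvd).2 hpw).symm.pow_right k
    have hwx := h (p ^ k) (pow_pos hp.pos k) hcop
    rwa [Nat.gcd_eq_right hpk] at hwx
  · intro h c _ hwc
    refine modEq_iff_forall_prime_pow.2 fun p k hp hpk => ?_
    rcases Nat.eq_zero_or_pos k with rfl | hk
    · exact Nat.modEq_one
    refine (h p k hp (hpk.trans (b.gcd_dvd_left c))).resolve_left fun hpw => hp.one_lt.ne' ?_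
    exact Nat.eq_one_of_dvd_coprimes hwc hpw
      ((dvd_pow_self p hk.ne').trans (hpk.trans (b.gcd_dvd_right c)))

/-! ### The filters of closed neighbourhoods -/

/-- The filter generated by the closures of the Golomb neighbourhoods of `x`. -/
def clNhds (x : ℕ+) : Filter ℕ+ := (𝓝 x).lift' closure

theorem tendsto_clNhds (h : ℕ+ ≃ₜ ℕ+) (x : ℕ+) : Tendsto h (clNhds x) (clNhds (h x)) :=
  tendsto_lift'_closure_nhds h.continuous x

theorem comap_clNhds (h : ℕ+ ≃ₜ ℕ+) (x : ℕ+) : comap h (clNhds (h x)) = clNhds x := by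
  refine le_antisymm ?_ (tendsto_clNhds h x).le_comap
  have := tendsto_clNhds h.symm (h x)
  rw [h.symm_apply_apply] at this
  rwa [← h.coe_toEquiv, ← h.toEquiv.symm_symm, ← map_equiv_symm]

theorem le_clNhds_iff {F : Filter ℕ+} {x : ℕ+} :
    F ≤ clNhds x ↔
      ∀ p k : ℕ, p.Prime → x ∉ multiples p → multiples p ∪ adicBall p k x ∈ F := by
  rw [clNhds, (hasBasis_nhds_golombBasic x).lift'_closure.ge_iff]
  constructor
  · intro h p k hp hpx
    have hcop : Nat.Coprime x (p ^ k) := ((hp.coprime_iff_not_dvd).2 hpx).symm.pow_right k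
    exact mem_of_superset (h (p ^ k) ⟨pow_pos hp.pos k, hcop⟩) fun w hw =>
      (mem_closure_golombBasic (pow_pos hp.pos k)).1 hw p k hp dvd_rfl
  · rintro h b ⟨hb, hxb⟩
    have hmem : ⋂ p ∈ b.primeFactors, (multiples p ∪ adicBall p (b.factorization p) x) ∈ F := by
      refine (biInter_finset_mem _).2 fun p hp => ?_
      have hpp := Nat.prime_of_mem_primeFactors hp
      exact h p _ hpp fun hpx =>
        hpp.one_lt.ne' (Nat.eq_one_of_dvd_coprimes hxb hpx (Nat.dvd_of_mem_primeFactors hp))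
    refine mem_of_superset hmem fun w hw => (mem_closure_golombBasic hb).2 fun p k hp hpk => ?_
    rcases Nat.eq_zero_or_pos k with rfl | hk
    · exact Or.inr Nat.modEq_one
    have hpb : p ∈ b.primeFactors := hp.mem_primeFactors ((dvd_pow_self p hk.ne').trans hpk) hb.ne'
    refine (Set.mem_iInter₂.1 hw p hpb).imp_right fun hwx => ?_
    exact adicBall_antitone p x ((hp.pow_dvd_iff_le_factorization hb.ne').1 hpk) hwx

theorem multiples_union_adicBall_mem_clNhds {p : ℕ} (hp : p.Prime) {x : ℕ+}
    (hx : x ∉ multiples p) (k : ℕ) : multiples p ∪ adicBall p k x ∈ clNhds x :=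
  le_clNhds_iff.1 le_rfl p k hp hx

theorem multiples_mem_clNhds_inf {p : ℕ} (hp : p.Prime) {x y : ℕ+} (hxy : x ≠ y)
    (hx : x ∉ multiples p) (hy : y ∉ multiples p) : multiples p ∈ clNhds x ⊓ clNhds y := by
  have hlarge : (x : ℕ) + y < p ^ (x + y : ℕ) := Nat.lt_pow_self hp.one_lt
  filter_upwards [mem_inf_of_left (multiples_union_adicBall_mem_clNhds hp hx (x + y)),
    mem_inf_of_right (multiples_union_adicBall_mem_clNhds hp hy (x + y))] with w hwx hwy
  refine hwx.elim id fun hwx => hwy.elim id fun hwy => absurd ?_ hxy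
  exact PNat.eq (Nat.ModEq.eq_of_lt_of_lt (hwx.symm.trans hwy) (by omega) (by omega))

theorem multiples_mem_iInf_clNhds {p : ℕ} (hp : p.Prime) : multiples p ∈ ⨅ x, clNhds x := by
  have hone : (1 : ℕ+) ∉ multiples p := hp.not_dvd_one
  have hsucc : (⟨p + 1, p.succ_pos⟩ : ℕ+) ∉ multiples p := fun h =>
    hp.not_dvd_one ((Nat.dvd_add_right dvd_rfl).1 h)
  have hne : (1 : ℕ+) ≠ ⟨p + 1, p.succ_pos⟩ := fun h =>
    hp.ne_zero (by simpa using congrArg PNat.val h)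
  have hle : ⨅ x, clNhds x ≤ clNhds 1 ⊓ clNhds ⟨p + 1, p.succ_pos⟩ :=
    le_inf (iInf_le _ _) (iInf_le _ _)
  exact hle (multiples_mem_clNhds_inf hp hne hone hsucc)

/-- The filter of `q`-adic neighbourhoods of `x`. -/
def adicNhds (q : ℕ) (x : ℕ+) : Filter ℕ+ := ⨅ k, 𝓟 (adicBall q k x)

theorem hasBasis_adicNhds (q : ℕ) (x : ℕ+) :
    (adicNhds q x).HasBasis (fun _ : ℕ => True) fun k => adicBall q k x :=
  hasBasis_iInf_principal (adicBall_antitone q x).directed_ge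

theorem adicBall_mem_adicNhds (q k : ℕ) (x : ℕ+) : adicBall q k x ∈ adicNhds q x :=
  (hasBasis_adicNhds q x).mem_of_mem trivial

theorem disjoint_multiples_adicBall {q : ℕ} {x : ℕ+} (hx : x ∉ multiples q) :
    Disjoint (multiples q) (adicBall q 1 x) := by
  refine Set.disjoint_left.2 fun w hqw hwx => hx ?_
  rw [adicBall, pow_one] at hwx
  exact (hwx.dvd_iff dvd_rfl).1 hqw

theorem compl_multiples_mem_adicNhds {q : ℕ} {x : ℕ+} (hx : x ∉ multiples q) :
    (multiples q)ᶜ ∈ adicNhds q x :=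
  mem_of_superset (adicBall_mem_adicNhds q 1 x) (disjoint_multiples_adicBall hx).subset_compl_left

/-- The filter generated by the sets of multiples of the primes other than `q`. -/
def multiplesAway (q : ℕ) : Filter ℕ+ := ⨅ r, ⨅ (_ : r.Prime ∧ r ≠ q), 𝓟 (multiples r)

theorem multiples_mem_multiplesAway {q r : ℕ} (hr : r.Prime) (hrq : r ≠ q) :
    multiples r ∈ multiplesAway q :=
  le_principal_iff.1 (iInf₂_le r ⟨hr, hrq⟩)

-- The witnesses `x * m_n ^ φ (q ^ n)`, with `m_n` the prime-to-`q` part of `n!`, converge to `x`.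
theorem neBot_adicNhds_inf_multiplesAway {q : ℕ} (hq : q.Prime) (x : ℕ+) :
    (adicNhds q x ⊓ multiplesAway q).NeBot := by
  let m (n : ℕ) : ℕ+ := ⟨ordCompl[q] n.factorial, Nat.ordCompl_pos q n.factorial_ne_zero⟩
  let w (n : ℕ) : ℕ+ := x * m n ^ (q ^ n).totient
  have hcop (n : ℕ) : Nat.Coprime (m n) (q ^ n) :=
    (Nat.coprime_ordCompl hq n.factorial_ne_zero).symm.pow_right n
  have hadic : Tendsto w atTop (adicNhds q x) := by
    refine (hasBasis_adicNhds q x).tendsto_right_iff.2 fun k _ => ?_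
    filter_upwards [eventually_ge_atTop k] with n hkn
    refine adicBall_antitone q x hkn ?_
    simpa [w, adicBall] using (Nat.ModEq.pow_totient (hcop n)).mul_left (x : ℕ)
  have hdvd : Tendsto w atTop (multiplesAway q) := by
    simp only [multiplesAway, tendsto_iInf, tendsto_principal]
    rintro r ⟨hr, hrq⟩
    filter_upwards [eventually_ge_atTop r] with n hrn
    have hrm : r ∣ m n := by
      refine Nat.Coprime.dvd_of_dvd_mul_left
        (((Nat.coprime_primes hr hq).2 hrq).pow_right (n.factorial.factorization q)) ?_
      rw [PNat.mk_coe, Nat.ordProj_mul_ordCompl_eq_self]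
      exact Nat.dvd_factorial hr.pos hrn
    have hpos : 0 < (q ^ n).totient := Nat.totient_pos.2 (pow_pos hq.pos n)
    simpa [w, multiples] using (hrm.trans (dvd_pow_self _ hpos.ne')).mul_left (x : ℕ)
  exact (tendsto_inf.2 ⟨hadic, hdvd⟩).neBot

theorem adicNhds_inf_multiplesAway_le_clNhds (q : ℕ) (x : ℕ+) :
    adicNhds q x ⊓ multiplesAway q ≤ clNhds x := by
  refine le_clNhds_iff.2 fun r k hr _ => ?_
  rcases eq_or_ne r q with rfl | hrq
  · exact mem_of_superset (mem_inf_of_left (adicBall_mem_adicNhds r k x)) Set.subset_union_right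
  · exact mem_of_superset (mem_inf_of_right (multiples_mem_multiplesAway hr hrq))
      Set.subset_union_left

theorem multiplesAway_le_clNhds {q : ℕ} {x : ℕ+} (hx : x ∈ multiples q) :
    multiplesAway q ≤ clNhds x := by
  refine le_clNhds_iff.2 fun r k hr hrx => ?_
  have hrq : r ≠ q := fun h => hrx (h ▸ hx)
  exact mem_of_superset (multiples_mem_multiplesAway hr hrq) Set.subset_union_left

theorem clNhds_inf_principal_compl_multiples_le {q : ℕ} (hq : q.Prime) {x : ℕ+}
    (hx : x ∉ multiples q) : clNhds x ⊓ 𝓟 (multiples q)ᶜ ≤ adicNhds q x := by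
  refine (hasBasis_adicNhds q x).ge_iff.2 fun k _ => mem_inf_principal.2 ?_
  filter_upwards [multiples_union_adicBall_mem_clNhds hq hx k] with w hw hqw
  exact hw.resolve_left hqw

/-! ### Homeomorphisms preserve coprimality -/

theorem clNhds_inf_le_iInf_clNhds {x y z : ℕ+} (hxy : x ≠ y) (hxz : x ≠ z) (hyz : y ≠ z)
    (cxy : Nat.Coprime x y) (cxz : Nat.Coprime x z) (cyz : Nat.Coprime y z) :
    clNhds x ⊓ clNhds y ⊓ clNhds z ≤ ⨅ t, clNhds t := by
  refine le_iInf fun t => le_clNhds_iff.2 fun p k hp _ => ?_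
  refine mem_of_superset ?_ Set.subset_union_left
  have not_mem {a b : ℕ+} (hab : Nat.Coprime a b) (ha : a ∈ multiples p) : b ∉ multiples p :=
    fun hb => hp.one_lt.ne' (Nat.eq_one_of_dvd_coprimes hab ha hb)
  by_cases hx : x ∈ multiples p
  · rw [inf_assoc]
    exact mem_inf_of_right (multiples_mem_clNhds_inf hp hyz (not_mem cxy hx) (not_mem cxz hx))
  by_cases hy : y ∈ multiples p
  · rw [inf_right_comm]
    exact mem_inf_of_left (multiples_mem_clNhds_inf hp hxz hx (not_mem cyz hy))
  · exact mem_inf_of_left (multiples_mem_clNhds_inf hp hxy hx hy)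

theorem not_clNhds_inf_le_iInf_clNhds {p : ℕ} (hp : p.Prime) {x y : ℕ+} (hx : x ∈ multiples p)
    (hy : y ∈ multiples p) (z : ℕ+) : ¬ clNhds x ⊓ clNhds y ⊓ clNhds z ≤ ⨅ t, clNhds t := by
  intro hle
  obtain ⟨u, hu, huz⟩ :
      ∃ u : ℕ+, u ∉ multiples p ∧ adicNhds p u ⊓ multiplesAway p ≤ clNhds z := by
    by_cases hz : z ∈ multiples p
    · exact ⟨1, hp.not_dvd_one, inf_le_right.trans (multiplesAway_le_clNhds hz)⟩
    · exact ⟨z, hz, adicNhds_inf_multiplesAway_le_clNhds p z⟩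
  have hmul : multiples p ∈ adicNhds p u ⊓ multiplesAway p :=
    le_inf (le_inf (inf_le_right.trans (multiplesAway_le_clNhds hx))
      (inf_le_right.trans (multiplesAway_le_clNhds hy))) huz
      (hle (multiples_mem_iInf_clNhds hp))
  have := neBot_adicNhds_inf_multiplesAway hp u
  obtain ⟨w, hw, hw'⟩ := Filter.nonempty_of_mem
    (inter_mem hmul (mem_inf_of_left (compl_multiples_mem_adicNhds hu)))
  exact hw' hw

theorem coprime_iff_exists_clNhds_inf_le {x y : ℕ+} (hxy : x ≠ y) :
    Nat.Coprime x y ↔ ∃ z, clNhds x ⊓ clNhds y ⊓ clNhds z ≤ ⨅ t, clNhds t := by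
  constructor
  · intro cxy
    have hx : x < x * y + 1 := PNat.lt_add_one_iff.2 (le_mul_of_one_le_right' one_le)
    have hy : y < x * y + 1 := PNat.lt_add_one_iff.2 (le_mul_of_one_le_left' one_le)
    exact ⟨x * y + 1, clNhds_inf_le_iInf_clNhds hxy hx.ne hy.ne cxy (by simp) (by simp)⟩
  · rintro ⟨z, hz⟩
    by_contra hcop
    obtain ⟨p, hp, hpx, hpy⟩ := Nat.Prime.not_coprime_iff_dvd.1 hcop
    exact not_clNhds_inf_le_iInf_clNhds hp hpx hpy z hz

theorem coprime_map_of_ne (h : ℕ+ ≃ₜ ℕ+) {x y : ℕ+} (hxy : x ≠ y) (hcop : Nat.Coprime x y) :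
    Nat.Coprime (h x) (h y) := by
  obtain ⟨z, hz⟩ := (coprime_iff_exists_clNhds_inf_le hxy).1 hcop
  refine (coprime_iff_exists_clNhds_inf_le (h.injective.ne hxy)).2 ⟨h z, ?_⟩
  have hcomap := comap_mono (m := h.symm) hz
  have hsymm (x : ℕ+) : comap h.symm (clNhds x) = clNhds (h x) := by
    simpa using comap_clNhds h.symm (h x)
  rw [comap_inf, comap_inf, comap_iInf] at hcomap
  simp only [hsymm] at hcomap
  rwa [← h.toEquiv.iInf_comp (g := clNhds)]

theorem map_one (h : ℕ+ ≃ₜ ℕ+) : h 1 = 1 := by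
  by_contra h1
  have hne : (1 : ℕ+) ≠ h.symm (h 1 * h 1) := fun he => h1 <| by
    rw [h.eq_symm_apply] at he
    exact left_eq_mul.1 he
  have hcop := coprime_map_of_ne h hne (by simp)
  rw [h.apply_symm_apply, PNat.mul_coe, Nat.coprime_mul_iff_right, Nat.coprime_self] at hcop
  exact h1 (PNat.coe_eq_one_iff.1 hcop.1)

theorem map_ne_one (h : ℕ+ ≃ₜ ℕ+) {x : ℕ+} (hx : x ≠ 1) : h x ≠ 1 :=
  fun hhx => hx (h.injective (hhx.trans (map_one h).symm))

theorem coprime_map (h : ℕ+ ≃ₜ ℕ+) {x y : ℕ+} (hcop : Nat.Coprime x y) :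
    Nat.Coprime (h x) (h y) := by
  rcases eq_or_ne x y with rfl | hxy
  · rw [Nat.coprime_self, PNat.coe_eq_one_iff] at hcop
    simp [hcop, map_one]
  · exact coprime_map_of_ne h hxy hcop

theorem coprime_map_iff (h : ℕ+ ≃ₜ ℕ+) {x y : ℕ+} :
    Nat.Coprime (h x) (h y) ↔ Nat.Coprime x y :=
  ⟨fun hcop => by simpa using coprime_map h.symm hcop, coprime_map h⟩

/-! ### Corresponding primes -/

/-- The primes `q` and `q'` correspond under `h`: divisibility of `x` by `q` means divisibility of
`h x` by `q'`. Eventually `q' = h q` (`CorrespondingPrimes.eq_apply`), but this is only known once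
the closures of powers are understood. -/
structure CorrespondingPrimes (h : ℕ+ ≃ₜ ℕ+) (q q' : ℕ) : Prop where
  prime : q.Prime
  prime' : q'.Prime
  mem_multiples_iff : ∀ x, x ∈ multiples q ↔ h x ∈ multiples q'

theorem mem_multiples_iff_not_coprime {p : ℕ+} (hp : (p : ℕ).Prime) {x : ℕ+} :
    x ∈ multiples p ↔ ¬ Nat.Coprime p x :=
  hp.dvd_iff_not_coprime

theorem exists_correspondingPrimes (h : ℕ+ ≃ₜ ℕ+) {q : ℕ} (hq : q.Prime) :
    ∃ q', CorrespondingPrimes h q q' := by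
  lift q to ℕ+ using hq.pos
  have hq1 : h q ≠ 1 := map_ne_one h fun h1 => hq.ne_one (PNat.coe_eq_one_iff.2 h1)
  obtain ⟨q', hq', hdvd⟩ := Nat.exists_prime_and_dvd (mt PNat.coe_eq_one_iff.1 hq1)
  lift q' to ℕ+ using hq'.pos
  have hdvd' : h.symm q' ∈ multiples q := by
    rwa [mem_multiples_iff_not_coprime hq, ← coprime_map_iff h, h.apply_symm_apply,
      Nat.coprime_comm, ← mem_multiples_iff_not_coprime hq']
  refine ⟨q', hq, hq', fun x => ⟨fun hx => ?_, fun hx => ?_⟩⟩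
  · rw [mem_multiples_iff_not_coprime hq', ← h.apply_symm_apply q', coprime_map_iff h]
    exact fun hcop => hq.ne_one (Nat.eq_one_of_dvd_coprimes hcop hdvd' hx)
  · rw [mem_multiples_iff_not_coprime hq, ← coprime_map_iff h]
    exact fun hcop => hq'.ne_one (Nat.eq_one_of_dvd_coprimes hcop hdvd hx)

theorem mem_powSet_prime {r : ℕ} (hr : r.Prime) {x : ℕ+} :
    x ∈ powSet r ↔ x ≠ 1 ∧ ∀ s : ℕ, s.Prime → x ∈ multiples s → s = r := by
  constructor
  · rintro ⟨k, hk, hx⟩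
    refine ⟨fun hx1 => (Nat.one_lt_pow hk.ne' hr.one_lt).ne' ?_, fun s hs hsx => ?_⟩
    · rw [← hx, hx1, PNat.one_coe]
    · exact Nat.prime_eq_prime_of_dvd_pow hs hr (hx.subst hsx)
  · rintro ⟨hx1, hs⟩
    have hx := Nat.eq_prime_pow_of_unique_prime_dvd x.ne_zero fun {d} => hs d
    refine ⟨_, Nat.pos_of_ne_zero fun hk => hx1 ?_, hx⟩
    rwa [hk, pow_zero, PNat.coe_eq_one_iff] at hx

theorem self_mem_powSet (a : ℕ+) : a ∈ powSet a := ⟨1, one_pos, (pow_one _).symm⟩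

namespace CorrespondingPrimes

variable {h : ℕ+ ≃ₜ ℕ+} {q q' : ℕ}

protected theorem symm (H : CorrespondingPrimes h q q') : CorrespondingPrimes h.symm q' q :=
  ⟨H.prime', H.prime, fun x => by simpa using (H.mem_multiples_iff (h.symm x)).symm⟩

theorem exists_left (h : ℕ+ ≃ₜ ℕ+) (hq' : q'.Prime) : ∃ q, CorrespondingPrimes h q q' := by
  obtain ⟨q, H⟩ := exists_correspondingPrimes h.symm hq'
  exact ⟨q, H.symm⟩

theorem map_notMem_multiples (H : CorrespondingPrimes h q q') {x : ℕ+} (hx : x ∉ multiples q) :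
    h x ∉ multiples q' :=
  mt (H.mem_multiples_iff x).2 hx

theorem unique {q'' : ℕ} (H : CorrespondingPrimes h q q') (H' : CorrespondingPrimes h q q'') :
    q'' = q' := by
  obtain ⟨r, rfl⟩ : ∃ r : ℕ+, (r : ℕ) = q' := ⟨⟨q', H.prime'.pos⟩, rfl⟩
  have hr : h.symm r ∈ multiples q := (H.symm.mem_multiples_iff r).1 (dvd_refl (r : ℕ))
  have hq' := (H'.mem_multiples_iff _).1 hr
  rw [h.apply_symm_apply] at hq'
  exact (Nat.prime_dvd_prime_iff_eq H'.prime' H.prime').1 hq'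

theorem map_mem_powSet (H : CorrespondingPrimes h q q') {x : ℕ+} (hx : x ∈ powSet q) :
    h x ∈ powSet q' := by
  obtain ⟨hx1, hxq⟩ := (mem_powSet_prime H.prime).1 hx
  refine (mem_powSet_prime H.prime').2 ⟨map_ne_one h hx1, fun s' hs' hsx => ?_⟩
  obtain ⟨s, S⟩ := exists_left h hs'
  obtain rfl := hxq s S.prime ((S.mem_multiples_iff x).2 hsx)
  exact H.unique S

theorem image_powSet (H : CorrespondingPrimes h q q') : h '' powSet q = powSet q' :=
  Set.Subset.antisymm (Set.image_subset_iff.2 fun _ hx => H.map_mem_powSet hx)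
    fun y hy => ⟨h.symm y, H.symm.map_mem_powSet hy, h.apply_symm_apply y⟩

end CorrespondingPrimes

/-! ### Homeomorphisms preserve adic neighbourhoods and closures -/

theorem eventually_mem_adicNhds_inf_multiplesAway {q : ℕ} {x : ℕ+} {S : Set ℕ+}
    (hS : S ∈ adicNhds q x ⊓ multiplesAway q) :
    ∀ᶠ a in adicNhds q x, S ∈ adicNhds q a ⊓ multiplesAway q := by
  obtain ⟨B, hB, T, hT, rfl⟩ := mem_inf_iff.1 hS
  obtain ⟨k, -, hk⟩ := (hasBasis_adicNhds q x).mem_iff.1 hB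
  filter_upwards [adicBall_mem_adicNhds q k x] with a ha
  rw [← adicBall_eq_of_mem ha] at hk
  exact inter_mem_inf (mem_of_superset (adicBall_mem_adicNhds q k a) hk) hT

namespace CorrespondingPrimes

variable {h : ℕ+ ≃ₜ ℕ+} {q q' : ℕ}

theorem tendsto_adicNhds_inf_multiplesAway (H : CorrespondingPrimes h q q') {x : ℕ+}
    (hx : x ∉ multiples q) :
    Tendsto h (adicNhds q x ⊓ multiplesAway q) (adicNhds q' (h x)) := by
  have hsource : adicNhds q x ⊓ multiplesAway q ≤ clNhds x ⊓ 𝓟 (multiples q)ᶜ :=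
    le_inf (adicNhds_inf_multiplesAway_le_clNhds q x)
      (le_principal_iff.2 (mem_inf_of_left (compl_multiples_mem_adicNhds hx)))
  have hcompl : Tendsto h (𝓟 (multiples q)ᶜ) (𝓟 (multiples q')ᶜ) :=
    tendsto_principal_principal.2 fun _ => H.map_notMem_multiples
  exact (((tendsto_clNhds h x).inf hcompl).mono_left hsource).mono_right
    (clNhds_inf_principal_compl_multiples_le H.prime' (H.map_notMem_multiples hx))

-- The filters at `x` and at a `q`-adically close `a` share the preimage of a given ball around
-- `h x`, which therefore meets the preimage of the ball of the same radius around `h a`.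
theorem tendsto_adicNhds (H : CorrespondingPrimes h q q') {x : ℕ+} (hx : x ∉ multiples q) :
    Tendsto h (adicNhds q x) (adicNhds q' (h x)) := by
  refine (hasBasis_adicNhds q' (h x)).tendsto_right_iff.2 fun k _ => ?_
  have hball {a : ℕ+} (ha : a ∉ multiples q) :
      h ⁻¹' adicBall q' k (h a) ∈ adicNhds q a ⊓ multiplesAway q :=
    H.tendsto_adicNhds_inf_multiplesAway ha (adicBall_mem_adicNhds q' k (h a))
  filter_upwards [eventually_mem_adicNhds_inf_multiplesAway (hball hx),
    compl_multiples_mem_adicNhds hx] with a hax ha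
  have := neBot_adicNhds_inf_multiplesAway H.prime a
  obtain ⟨w, hwx, hwa⟩ := Filter.nonempty_of_mem (inter_mem hax (hball ha))
  exact hwa.symm.trans hwx

end CorrespondingPrimes

theorem nhds_padicTop {q : ℕ} (hq : q.Prime) (y : Np q) :
    @nhds _ (padicTop q) y = comap Subtype.val (adicNhds q y) := by
  rw [padicTop, nhds_generateFrom, adicNhds, comap_iInf]
  simp only [comap_principal]
  apply le_antisymm
  · refine le_iInf fun k => iInf₂_le_of_le {z : Np q | z.1 ∈ golombBasic y (q ^ (k + 1))}
      ⟨⟨0, rfl⟩, y, k + 1, y.1.pos, k.succ_pos, rfl⟩ (principal_mono.2 fun z hz => ?_)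
    exact adicBall_antitone q y k.le_succ (mem_golombBasic.1 hz).2
  · refine le_iInf₂ ?_
    rintro _ ⟨hy, x, n, -, -, rfl⟩
    obtain ⟨hxy, hyx⟩ : x ≤ (y : ℕ) ∧ (y : ℕ) ≡ x [MOD q ^ n] := mem_golombBasic.1 hy
    refine iInf_le_of_le (n + y) (principal_mono.2 fun z hz => ?_)
    have hz : (z : ℕ) ≡ y [MOD q ^ (n + y : ℕ)] := hz
    -- `y` is smaller than the modulus, hence the least element of its residue class
    have hyz : (y : ℕ) ≤ z := by
      have hlt : (y : ℕ) < q ^ (n + y : ℕ) :=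
        (Nat.lt_pow_self hq.one_lt).trans_le (pow_le_pow_right₀ hq.one_le (Nat.le_add_left _ _))
      rw [← Nat.mod_eq_of_lt hlt, ← hz]
      exact Nat.mod_le _ _
    have hzy : (z : ℕ) ≡ y [MOD q ^ n] := hz.of_dvd (pow_dvd_pow q (Nat.le_add_right _ _))
    exact mem_golombBasic.2 ⟨hxy.trans hyz, hzy.trans hyx⟩

theorem mem_padicClosure {q : ℕ} (hq : q.Prime) {x : ℕ+} {A : Set ℕ+} :
    x ∈ padicClosure q A ↔ x ∉ multiples q ∧ ∃ᶠ a in adicNhds q x, a ∈ A := by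
  let := padicTop q
  have hmem (hx : x ∉ multiples q) : (⟨x, hx⟩ : Np q) ∈ closure (Subtype.val ⁻¹' A) ↔
      ∃ᶠ a in adicNhds q x, a ∈ A := by
    rw [mem_closure_iff_frequently, nhds_padicTop hq, frequently_comap]
    constructor
    · refine fun hfreq => hfreq.mono ?_
      rintro _ ⟨a, rfl, ha⟩
      exact ha
    · exact fun hfreq => (hfreq.and_eventually (compl_multiples_mem_adicNhds hx)).mono
        fun a ha => ⟨⟨a, ha.2⟩, rfl, ha.1⟩
  constructor
  · rintro ⟨y, hy, rfl⟩
    exact ⟨y.2, (hmem y.2).1 hy⟩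
  · rintro ⟨hx, hfreq⟩
    exact ⟨⟨x, hx⟩, (hmem hx).2 hfreq, rfl⟩

namespace CorrespondingPrimes

variable {h : ℕ+ ≃ₜ ℕ+} {q q' : ℕ}

theorem image_padicClosure_subset (H : CorrespondingPrimes h q q') (A : Set ℕ+) :
    h '' padicClosure q A ⊆ padicClosure q' (h '' A) := by
  rintro _ ⟨x, hx, rfl⟩
  obtain ⟨hqx, hfreq⟩ := (mem_padicClosure H.prime).1 hx
  exact (mem_padicClosure H.prime').2 ⟨H.map_notMem_multiples hqx,
    (H.tendsto_adicNhds hqx).frequently (hfreq.mono fun _ => Set.mem_image_of_mem h)⟩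

theorem image_padicClosure (H : CorrespondingPrimes h q q') (A : Set ℕ+) :
    h '' padicClosure q A = padicClosure q' (h '' A) := by
  refine (H.image_padicClosure_subset A).antisymm ?_
  have hsymm := H.symm.image_padicClosure_subset (h '' A)
  rw [h.image_symm, h.preimage_image] at hsymm
  exact (h.image_preimage _).symm.trans_subset (Set.image_mono hsymm)

theorem image_clPow_prime (H : CorrespondingPrimes h q q') {r r' : ℕ}
    (R : CorrespondingPrimes h r r') : h '' clPow q r = clPow q' r' := by
  rw [clPow, H.image_padicClosure, R.image_powSet, clPow]

end CorrespondingPrimes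

/-! ### Closures of powers -/

theorem mem_clPow {q : ℕ} (hq : q.Prime) {a x : ℕ+} :
    x ∈ clPow q a ↔
      x ∉ multiples q ∧ ∀ k : ℕ, ∃ n : ℕ, 0 < n ∧ (a : ℕ) ^ n ≡ x [MOD q ^ k] := by
  rw [clPow, mem_padicClosure hq, (hasBasis_adicNhds q x).frequently_iff]
  refine and_congr_right fun _ => forall_congr' fun k => ?_
  constructor
  · intro h
    obtain ⟨y, hyx, n, hn, hy⟩ := h trivial
    exact ⟨n, hn, hy ▸ hyx⟩
  · rintro ⟨n, hn, hnx⟩ -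
    refine ⟨a ^ n, ?_, n, hn, PNat.pow_coe a n⟩
    simpa [adicBall] using hnx

theorem clPow_subset_of_mem_powSet (q : ℕ) {a : ℕ} {b : ℕ+} (hb : b ∈ powSet a) :
    clPow q b ⊆ clPow q a := by
  obtain ⟨j, hj, hb⟩ := hb
  refine Set.image_mono (@closure_mono _ (padicTop q) _ _ (Set.preimage_mono ?_))
  rintro y ⟨k, hk, hy⟩
  exact ⟨j * k, Nat.mul_pos hj hk, by rw [hy, hb, pow_mul]⟩

theorem orderOf_eq_of_modEq_one {q : ℕ} (hq : q.Prime) {s c : ℕ} (hs : 2 ≤ s)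
    (hc : c ≡ 1 [MOD q ^ s]) (hc' : ¬ c ≡ 1 [MOD q ^ (s + 1)]) (k : ℕ) :
    orderOf (c : ZMod (q ^ (k + s))) = q ^ k := by
  have : Fact q.Prime := ⟨hq⟩
  obtain ⟨u, hu⟩ := Nat.modEq_iff_dvd.1 hc.symm
  have hcu : (c : ℤ) = 1 + q ^ s * u := by
    push_cast at hu
    linarith
  have hqu : ¬ (q : ℤ) ∣ u := by
    rintro ⟨v, rfl⟩
    refine hc' (Nat.modEq_iff_dvd.2 ⟨-v, ?_⟩)
    push_cast
    rw [hcu]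
    ring
  have hsq : s + 2 ≤ q * s := by nlinarith [hq.two_le]
  have hcast : (c : ZMod (q ^ (k + s))) = 1 + q ^ s * u := by
    have := congrArg (Int.cast : ℤ → ZMod (q ^ (k + s))) hcu
    push_cast at this
    exact this
  rw [hcast]
  exact ZMod.orderOf_one_add_mul_prime_pow hq s (by omega) hsq u hqu k

theorem exists_lt_natCast_eq_one_add_pow_mul {q s z : ℕ} (hq : 0 < q) (hz : z ≡ 1 [MOD q ^ s])
    (k : ℕ) : ∃ j < q ^ k, (z : ZMod (q ^ (k + s))) = 1 + q ^ s * j := by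
  obtain ⟨m, hm⟩ := Nat.modEq_iff_dvd.1 hz.symm
  have hpos : (0 : ℤ) < q ^ k := by positivity
  lift m % q ^ k to ℕ using Int.emod_nonneg m hpos.ne' with j hj
  refine ⟨j, by exact_mod_cast hj ▸ Int.emod_lt_of_pos m hpos, ?_⟩
  have hzj : (z : ℤ) = 1 + q ^ s * j + q ^ (k + s) * (m / q ^ k) := by
    rw [hj, pow_add]
    push_cast at hm
    linear_combination hm - (q : ℤ) ^ s * Int.emod_add_mul_ediv m (q ^ k)
  have hcast := congrArg (Int.cast : ℤ → ZMod (q ^ (k + s))) hzj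
  have hzero : (q : ZMod (q ^ (k + s))) ^ (k + s) = 0 := by
    rw [← Nat.cast_pow, ZMod.natCast_self]
  push_cast at hcast
  rwa [hzero, zero_mul, add_zero] at hcast

theorem exists_pow_modEq_of_modEq_one {q : ℕ} (hq : q.Prime) {s c z : ℕ} (hs : 2 ≤ s)
    (hc : c ≡ 1 [MOD q ^ s]) (hc' : ¬ c ≡ 1 [MOD q ^ (s + 1)]) (hz : z ≡ 1 [MOD q ^ s]) (k : ℕ) :
    ∃ i : ℕ, c ^ i ≡ z [MOD q ^ (k + s)] := by
  classical
  let powers := (Finset.range (q ^ k)).image fun i => (c : ZMod (q ^ (k + s))) ^ i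
  let oneClass := (Finset.range (q ^ k)).image fun j : ℕ => (1 + q ^ s * j : ZMod (q ^ (k + s)))
  have hmem {z : ℕ} (hz : z ≡ 1 [MOD q ^ s]) : (z : ZMod (q ^ (k + s))) ∈ oneClass := by
    obtain ⟨j, hj, hzj⟩ := exists_lt_natCast_eq_one_add_pow_mul hq.pos hz k
    exact Finset.mem_image.2 ⟨j, Finset.mem_range.2 hj, hzj.symm⟩
  have hsub : powers ⊆ oneClass := by
    refine Finset.image_subset_iff.2 fun i _ => ?_
    rw [← Nat.cast_pow]
    exact hmem (by simpa using hc.pow i)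
  have hinj : Set.InjOn (fun i => (c : ZMod (q ^ (k + s))) ^ i) (Finset.range (q ^ k)) := by
    rw [Finset.coe_range, ← orderOf_eq_of_modEq_one hq hs hc hc' k]
    exact pow_injOn_Iio_orderOf
  have hcard : oneClass.card ≤ powers.card := by
    rw [Finset.card_image_of_injOn hinj]
    exact Finset.card_image_le
  have hz' := hmem hz
  rw [← Finset.eq_of_subset_of_card_le hsub hcard] at hz'
  obtain ⟨i, -, hi⟩ := Finset.mem_image.1 hz'
  refine ⟨i, (ZMod.natCast_eq_natCast_iff _ _ _).1 ?_⟩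
  rwa [Nat.cast_pow]

theorem exists_modEq_one_of_one_lt {q a : ℕ} (hq : q.Prime) (ha : 1 < a) (hqa : ¬ q ∣ a) :
    ∃ n s : ℕ, 2 ≤ s ∧ a ^ n ≡ 1 [MOD q ^ s] ∧ ¬ a ^ n ≡ 1 [MOD q ^ (s + 1)] := by
  let n := (q ^ 2).totient
  have hn : n ≠ 0 := (Nat.totient_pos.2 (pow_pos hq.pos 2)).ne'
  have han : 1 < a ^ n := Nat.one_lt_pow hn ha
  have hmodEq (s : ℕ) : a ^ n ≡ 1 [MOD q ^ s] ↔ s ≤ (a ^ n - 1).factorization q := by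
    rw [Nat.ModEq.comm, Nat.modEq_iff_dvd' han.le,
      hq.pow_dvd_iff_le_factorization (Nat.sub_pos_of_lt han).ne']
  have hcop : Nat.Coprime a (q ^ 2) := ((hq.coprime_iff_not_dvd).2 hqa).symm.pow_right 2
  exact ⟨n, (a ^ n - 1).factorization q, (hmodEq 2).1 (Nat.ModEq.pow_totient hcop),
    (hmodEq _).2 le_rfl, fun h => Nat.not_succ_le_self _ ((hmodEq _).1 h)⟩

theorem exists_mul_modEq_of_coprime {a n : ℕ} (hn : 0 < n) (han : Nat.Coprime a n) (x : ℕ) :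
    ∃ z, a * z ≡ x [MOD n] := by
  refine ⟨a ^ (n.totient - 1) * x, ?_⟩
  rw [← mul_assoc, mul_pow_sub_one (Nat.totient_pos.2 hn).ne']
  simpa using (Nat.ModEq.pow_totient han).mul_right x

theorem mem_clPow_iff_exists_modEq {q n s : ℕ} (hq : q.Prime) {b x : ℕ+} (hb : b ∉ multiples q)
    (hs : 2 ≤ s) (hbn : (b : ℕ) ^ n ≡ 1 [MOD q ^ s])
    (hbn' : ¬ (b : ℕ) ^ n ≡ 1 [MOD q ^ (s + 1)]) :
    x ∈ clPow q b ↔ x ∉ multiples q ∧ ∃ t : ℕ, 0 < t ∧ (b : ℕ) ^ t ≡ x [MOD q ^ s] := by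
  rw [mem_clPow hq]
  refine and_congr_right fun _ => ⟨fun h => h s, ?_⟩
  rintro ⟨t, ht, htx⟩ k
  have hcop (m : ℕ) : Nat.Coprime ((b : ℕ) ^ t) (q ^ m) :=
    Nat.Coprime.pow t m ((hq.coprime_iff_not_dvd).2 hb).symm
  obtain ⟨z, hz⟩ := exists_mul_modEq_of_coprime (pow_pos hq.pos (k + s)) (hcop (k + s)) x
  have hz1 : z ≡ 1 [MOD q ^ s] := by
    refine Nat.ModEq.cancel_left_of_coprime (hcop s).symm (c := (b : ℕ) ^ t) ?_
    rw [mul_one]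
    exact (hz.of_dvd (pow_dvd_pow q (Nat.le_add_left s k))).trans htx.symm
  obtain ⟨i, hi⟩ := exists_pow_modEq_of_modEq_one hq hs hbn hbn' hz1 k
  refine ⟨t + n * i, Nat.add_pos_left ht _, ?_⟩
  rw [pow_add, pow_mul]
  exact ((hi.mul_left _).trans hz).of_dvd (pow_dvd_pow q (Nat.le_add_right k s))

theorem eventually_clPow_eq {q : ℕ} (hq : q.Prime) {a : ℕ+} (ha : a ≠ 1)
    (hqa : a ∉ multiples q) : ∀ᶠ b : ℕ+ in adicNhds q a, clPow q b = clPow q a := by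
  have ha1 : 1 < (a : ℕ) :=
    lt_of_le_of_ne a.pos fun h => ha (PNat.coe_eq_one_iff.1 h.symm)
  obtain ⟨n, s, hs, hn, hn'⟩ := exists_modEq_one_of_one_lt hq ha1 hqa
  filter_upwards [adicBall_mem_adicNhds q (s + 1) a, compl_multiples_mem_adicNhds hqa]
    with b hba hqb
  have hba : (b : ℕ) ≡ a [MOD q ^ (s + 1)] := hba
  have hba' : (b : ℕ) ≡ a [MOD q ^ s] := hba.of_dvd (pow_dvd_pow q s.le_succ)
  have hbn : (b : ℕ) ^ n ≡ 1 [MOD q ^ s] := (hba'.pow n).trans hn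
  have hbn' : ¬ (b : ℕ) ^ n ≡ 1 [MOD q ^ (s + 1)] := fun h => hn' ((hba.pow n).symm.trans h)
  ext x
  rw [mem_clPow_iff_exists_modEq hq hqb hs hbn hbn', mem_clPow_iff_exists_modEq hq hqa hs hn hn']
  have hiff (t : ℕ) : (b : ℕ) ^ t ≡ x [MOD q ^ s] ↔ (a : ℕ) ^ t ≡ x [MOD q ^ s] :=
    ⟨(hba'.pow t).symm.trans, (hba'.pow t).trans⟩
  simp only [hiff]

theorem frequently_prime_adicNhds {q : ℕ} (hq : q.Prime) {x : ℕ+} (hx : x ∉ multiples q) :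
    ∃ᶠ r : ℕ+ in adicNhds q x, (r : ℕ).Prime := by
  refine (hasBasis_adicNhds q x).frequently_iff.2 fun {k} _ => ?_
  obtain ⟨r, -, hr, hrx⟩ := Nat.forall_exists_prime_gt_and_modEq 0 (pow_pos hq.pos k).ne'
    (((hq.coprime_iff_not_dvd).2 hx).symm.pow_right k)
  exact ⟨⟨r, hr.pos⟩, hrx, hr⟩

theorem modEq_one_of_forall_mem_clPow {b x : ℕ+}
    (hx : ∀ q : ℕ, q.Prime → b ∉ multiples q → x ∈ clPow q b) : (x : ℕ) ≡ 1 [MOD b - 1] := by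
  refine modEq_iff_forall_prime_pow.2 fun q k hq hqk => ?_
  rcases Nat.eq_zero_or_pos k with rfl | hk
  · exact Nat.modEq_one
  have hb : (b : ℕ) ≡ 1 [MOD q ^ k] := ((Nat.modEq_iff_dvd' (PNat.pos b)).2 hqk).symm
  have hqb : b ∉ multiples q := fun hqb =>
    hq.not_dvd_one (((hb.of_dvd (dvd_pow_self q hk.ne')).dvd_iff dvd_rfl).1 hqb)
  obtain ⟨n, -, hn⟩ := ((mem_clPow hq).1 (hx q hq hqb)).2 k
  simpa using hn.symm.trans (hb.pow n)

namespace CorrespondingPrimes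

variable {h : ℕ+ ≃ₜ ℕ+} {q q' : ℕ}

-- By Dirichlet's theorem `h x` is close to a prime `r'`, and `h.symm r'` is then close to `x` and
-- a power of the prime corresponding to `r'`.
theorem image_clPow_subset (H : CorrespondingPrimes h q q') {x : ℕ+} (hx : x ≠ 1)
    (hqx : x ∉ multiples q) : h '' clPow q x ⊆ clPow q' (h x) := by
  have hqx' := H.map_notMem_multiples hqx
  have hsymm : Tendsto h.symm (adicNhds q' (h x)) (adicNhds q x) := by
    simpa using H.symm.tendsto_adicNhds hqx'
  obtain ⟨r', hr', hr'x, hrx⟩ := ((frequently_prime_adicNhds H.prime' hqx').and_eventually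
    ((eventually_clPow_eq H.prime' (map_ne_one h hx) hqx').and
      (hsymm.eventually (eventually_clPow_eq H.prime hx hqx)))).exists
  obtain ⟨r, R⟩ := exists_left h hr'
  calc h '' clPow q x = h '' clPow q (h.symm r') := by rw [hrx]
    _ ⊆ h '' clPow q r :=
      Set.image_mono (clPow_subset_of_mem_powSet q (R.symm.map_mem_powSet (self_mem_powSet r')))
    _ = clPow q' r' := H.image_clPow_prime R
    _ = clPow q' (h x) := hr'x

theorem image_clPow (H : CorrespondingPrimes h q q') {x : ℕ+} (hx : x ≠ 1)
    (hqx : x ∉ multiples q) : h '' clPow q x = clPow q' (h x) := by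
  refine (H.image_clPow_subset hx hqx).antisymm ?_
  have hsymm := H.symm.image_clPow_subset (map_ne_one h hx) (H.map_notMem_multiples hqx)
  rw [h.image_symm, h.symm_apply_apply] at hsymm
  exact (h.image_preimage _).symm.trans_subset (Set.image_mono hsymm)

-- `h p` is a power of `p'`, and the powers of `p'` and of `h p` have the same closure for every
-- prime not dividing `h p`, both being the image of the closure of the powers of `p`.
theorem eq_apply {p : ℕ+} {p' : ℕ} (H : CorrespondingPrimes h p p') : p' = h p := by
  obtain ⟨r, rfl⟩ : ∃ r : ℕ+, (r : ℕ) = p' := ⟨⟨p', H.prime'.pos⟩, rfl⟩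
  have hp1 : p ≠ 1 := fun hp => H.prime.ne_one (PNat.coe_eq_one_iff.2 hp)
  have hdvd : (r : ℕ) ∣ h p := (H.mem_multiples_iff p).1 (dvd_refl (p : ℕ))
  have hmem : ∀ q' : ℕ, q'.Prime → h p ∉ multiples q' → r ∈ clPow q' (h p) := by
    intro q' hq' hqp'
    obtain ⟨q, Q⟩ := exists_left h hq'
    rw [← Q.image_clPow hp1 fun hqp => hqp' ((Q.mem_multiples_iff p).1 hqp),
      Q.image_clPow_prime H, mem_clPow hq']
    exact ⟨fun hqr => hqp' (dvd_trans hqr hdvd), fun _ => ⟨1, one_pos, by rw [pow_one]⟩⟩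
  have hle : (h p : ℕ) - 1 ≤ r - 1 :=
    Nat.le_of_dvd (Nat.sub_pos_of_lt H.prime'.one_lt)
      ((Nat.modEq_iff_dvd' r.pos).1 (modEq_one_of_forall_mem_clPow hmem).symm)
  have hge := Nat.le_of_dvd (h p).pos hdvd
  have hr := r.pos
  omega

theorem image_mem_XX (H : CorrespondingPrimes h q q') {X : Set ℕ+} (hX : X ∈ XX q) :
    h '' X ∈ XX q' := by
  obtain ⟨a, ha, ha1, hqa, rfl⟩ := hX
  lift a to ℕ+ using ha
  have ha1 : a ≠ 1 := mt PNat.coe_eq_one_iff.2 ha1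
  exact ⟨h a, (h a).pos, mt PNat.coe_eq_one_iff.1 (map_ne_one h ha1), H.map_notMem_multiples hqa,
    H.image_clPow ha1 hqa⟩

theorem bijOn_image_XX (H : CorrespondingPrimes h q q') :
    Set.BijOn (fun X : Set ℕ+ => h '' X) (XX q) (XX q') :=
  Set.InvOn.bijOn (f' := fun X => h.symm '' X)
    ⟨fun X _ => h.toEquiv.symm_image_image X, fun X _ => h.toEquiv.image_symm_image X⟩
    (fun _ => H.image_mem_XX) fun _ => H.symm.image_mem_XX

end CorrespondingPrimes

theorem correspondingPrimes_apply (h : ℕ+ ≃ₜ ℕ+) {p : ℕ+} (hp : (p : ℕ).Prime) :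
    CorrespondingPrimes h p (h p) := by
  obtain ⟨p', H⟩ := exists_correspondingPrimes h hp
  exact H.eq_apply ▸ H

end GolombSpace

/-- A homeomorphism `h` of the Golomb space maps the closure of `a^ℕ` in the `p`-adic
topology on `ℕ \ pℕ` onto the closure of `h(a)^ℕ` in the `h(p)`-adic topology on
`ℕ \ h(p)ℕ`; consequently `X ↦ h(X)` is an order isomorphism of the poset `𝒳_p`
(ordered by reverse inclusion) onto the poset `𝒳_{h(p)}`. -/
theorem golomb_homeo_XX_orderIso (h : ℕ+ ≃ₜ ℕ+) (p : ℕ+) (hp : (p : ℕ).Prime) :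
    (∀ (a : ℕ) (ha : 0 < a), a ≠ 1 → ¬ (p : ℕ) ∣ a →
      h '' clPow (p : ℕ) a = clPow (↑(h p) : ℕ) (↑(h ⟨a, ha⟩) : ℕ)) ∧
    Set.BijOn (fun X : Set ℕ+ => h '' X) (XX (p : ℕ)) (XX (↑(h p) : ℕ)) ∧
    (∀ X ∈ XX (p : ℕ), ∀ Y ∈ XX (p : ℕ), X ⊆ Y ↔ h '' X ⊆ h '' Y) := by
  have H := GolombSpace.correspondingPrimes_apply h hp
  refine ⟨fun a ha ha1 hpa => ?_, H.bijOn_image_XX,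
    fun X _ Y _ => (Set.image_subset_image_iff h.injective).symm⟩
  lift a to ℕ+ using ha
  exact H.image_clPow (mt PNat.coe_eq_one_iff.2 ha1) hpa
end

section
/- Let p be a prime number. If a ∈ ℕ \ pℕ and n ∈ ℕ are such that the residue class π_n(a) has multiplicative order at least max(p,3) in the group (ℤ/p^nℤ)ˣ, then the closure of a^ℕ in the p-adic topology on ℕ \ pℕ equals ℕ ∩ π_n^{-1}(π_n(a)^ℕ), the set of positive integers whose residue modulo p^n is a power of π_n(a). -/
/-!
Membership of `y` in the closure of `a^ℕ` means that `y` is a power of `a` modulo every `p ^ m`, so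
the point is that being a power of `a` modulo `p ^ n` implies this for all `m ≥ n`. It suffices that
the subgroup generated by `a` modulo `p ^ m` contains the kernel of the reduction
`(ℤ/p^mℤ)ˣ → (ℤ/p^nℤ)ˣ`.

Put `b = a ^ (max p 3 - 1)`. Then `b ≡ 1` modulo `p` if `p` is odd (Fermat) and modulo `4` if
`p = 2`, while `b ≢ 1` modulo `p ^ n` by the assumption on the order of `a`. Hence
`b = 1 + p ^ i * v` with `p ∤ v` and `i < n`. Such a `b` has order `p ^ (m - i)` modulo `p ^ m`,
which is the order of the kernel of `(ℤ/p^mℤ)ˣ → (ℤ/p^iℤ)ˣ`. So `b` generates this kernel, which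
contains the one for `n`.
-/

open TopologicalSpace

lemma exists_lt_pow_eq_of_mem_powers {M : Type*} [Monoid M] {x y : M} (hx : IsOfFinOrder x)
    (hy : y ∈ Submonoid.powers x) (B : ℕ) : ∃ k, B < k ∧ x ^ k = y := by
  obtain ⟨k, rfl⟩ := hy
  refine ⟨k + orderOf x * (B + 1), ?_, by simp [pow_add, pow_mul, pow_orderOf_eq_one]⟩
  nlinarith [hx.orderOf_pos]

lemma mem_zpowers_of_map_mem_zpowers {G H : Type*} [Group G] [Group H] {f : G →* H} {x y : G}
    (hker : f.ker ≤ Subgroup.zpowers x) (hy : f y ∈ Subgroup.zpowers (f x)) :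
    y ∈ Subgroup.zpowers x := by
  rwa [← Subgroup.comap_map_eq_self hker, Subgroup.mem_comap, MonoidHom.map_zpowers]

lemma card_ker_unitsMap_mul_totient {d n : ℕ} [NeZero n] (h : d ∣ n) :
    Nat.card (ZMod.unitsMap h).ker * d.totient = n.totient := by
  have : NeZero d := ⟨ne_zero_of_dvd_ne_zero (NeZero.ne n) h⟩
  have hsurj := MonoidHom.range_eq_top.2 (ZMod.unitsMap_surjective h)
  have hcard := (ZMod.unitsMap h).ker.card_mul_index
  rwa [Subgroup.index_ker, hsurj, Subgroup.card_top, Nat.card_eq_fintype_card (α := (ZMod n)ˣ),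
    Nat.card_eq_fintype_card (α := (ZMod d)ˣ), ZMod.card_units_eq_totient,
    ZMod.card_units_eq_totient] at hcard

lemma ker_unitsMap_le_ker_unitsMap_of_dvd {d n m : ℕ} (hdn : d ∣ n) (hnm : n ∣ m) :
    (ZMod.unitsMap hnm).ker ≤ (ZMod.unitsMap (hdn.trans hnm)).ker := by
  rw [← ZMod.unitsMap_comp hdn hnm]
  exact ((ZMod.unitsMap hnm).ker_le_comap _).trans_eq (MonoidHom.comap_ker _ _)

lemma unitsMap_eq_one_iff_dvd_sub_one {d n : ℕ} (h : d ∣ n) {u : (ZMod n)ˣ} {a : ℤ}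
    (hu : (u : ZMod n) = a) : ZMod.unitsMap h u = 1 ↔ (d : ℤ) ∣ a - 1 := by
  rw [Units.ext_iff, ZMod.unitsMap_val, hu, ZMod.cast_intCast h, Units.val_one, ← sub_eq_zero,
    ← ZMod.intCast_zmod_eq_zero_iff_dvd, Int.cast_sub, Int.cast_one]

lemma natCast_mem_powers_of_dvd {d n : ℕ} (h : d ∣ n) {a y : ℕ}
    (hy : (y : ZMod n) ∈ Submonoid.powers (a : ZMod n)) :
    (y : ZMod d) ∈ Submonoid.powers (a : ZMod d) := by
  obtain ⟨k, hk⟩ := hy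
  exact ⟨k, by simpa [-ZMod.castHom_apply] using congrArg (ZMod.castHom h (ZMod d)) hk⟩

section PrimePower

variable {p : ℕ}

lemma exists_pow_dvd_pow_max_sub_one (hp : p.Prime) {a : ℤ} (ha : ¬ (p : ℤ) ∣ a) :
    ∃ j, j + 2 ≤ p * j ∧ (p : ℤ) ^ j ∣ a ^ (max p 3 - 1) - 1 := by
  rcases hp.eq_two_or_odd' with rfl | hodd
  · have ha_odd : Odd a := by rwa [← Int.not_even_iff_odd, even_iff_two_dvd]
    exact ⟨2, le_rfl, dvd_trans (by norm_num) (Int.eight_dvd_sq_sub_one_of_odd ha_odd)⟩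
  · have hp3 : 3 ≤ p := by
      have := hp.two_le
      have := hodd.ne_two_of_dvd_nat dvd_rfl
      omega
    have hcop : IsCoprime a p := ((Nat.prime_iff_prime_int.1 hp).coprime_iff_not_dvd.2 ha).symm
    refine ⟨1, by omega, ?_⟩
    rw [max_eq_left hp3, pow_one]
    exact (Int.ModEq.pow_card_sub_one_eq_one hp hcop).symm.dvd

lemma exists_pow_max_sub_one_eq_one_add (hp : p.Prime) {a : ℤ} (ha : ¬ (p : ℤ) ∣ a) {n : ℕ}
    (hn : ¬ (p : ℤ) ^ n ∣ a ^ (max p 3 - 1) - 1) :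
    ∃ i < n, i + 2 ≤ p * i ∧
      ∃ v : ℤ, ¬ (p : ℤ) ∣ v ∧ a ^ (max p 3 - 1) = 1 + (p : ℤ) ^ i * v := by
  obtain ⟨j, hj, hjdvd⟩ := exists_pow_dvd_pow_max_sub_one hp ha
  have hfin : FiniteMultiplicity (p : ℤ) (a ^ (max p 3 - 1) - 1) :=
    .of_prime_left (Nat.prime_iff_prime_int.1 hp) fun h => hn (h ▸ dvd_zero _)
  obtain ⟨v, hv, hpv⟩ := hfin.exists_eq_pow_mul_and_not_dvd
  have hji := hfin.le_multiplicity_of_pow_dvd hjdvd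
  have hin := not_le.1 fun h => hn (hfin.pow_dvd_iff_le_multiplicity.2 h)
  exact ⟨_, hin, by nlinarith [hp.two_le], v, hpv, by rw [← hv]; ring⟩

lemma card_ker_unitsMap_prime_pow (hp : p.Prime) {i m : ℕ} (hi : 0 < i) (him : i ≤ m) :
    Nat.card (ZMod.unitsMap (pow_dvd_pow p him)).ker = p ^ (m - i) := by
  have : NeZero p := ⟨hp.ne_zero⟩
  have hcard := card_ker_unitsMap_mul_totient (pow_dvd_pow p him)
  refine Nat.eq_of_mul_eq_mul_right (Nat.totient_pos.2 (pow_pos hp.pos i)) (hcard.trans ?_)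
  rw [Nat.totient_prime_pow hp (hi.trans_le him), Nat.totient_prime_pow hp hi, ← mul_assoc,
    ← pow_add]
  congr 2
  omega

/-- For `i ≠ 0` the condition `i + 2 ≤ p * i` excludes only `p = 2`, `i = 1`, where `b = -1` is a
counterexample. -/
lemma zpowers_eq_ker_unitsMap (hp : p.Prime) {i m : ℕ} (hi : i + 2 ≤ p * i) (him : i ≤ m)
    {b : (ZMod (p ^ m))ˣ} {v : ℤ} (hv : ¬ (p : ℤ) ∣ v)
    (hb : (b : ZMod (p ^ m)) = (1 + (p : ℤ) ^ i * v : ℤ)) :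
    Subgroup.zpowers b = (ZMod.unitsMap (pow_dvd_pow p him)).ker := by
  have : NeZero p := ⟨hp.ne_zero⟩
  have hi0 : i ≠ 0 := by rintro rfl; simp at hi
  have hker : b ∈ (ZMod.unitsMap (pow_dvd_pow p him)).ker := by
    rw [MonoidHom.mem_ker, unitsMap_eq_one_iff_dvd_sub_one _ hb]
    simp
  have horder : orderOf b = p ^ (m - i) := by
    obtain ⟨l, rfl⟩ := Nat.exists_eq_add_of_le' him
    rw [← orderOf_units, hb]
    push_cast
    rw [ZMod.orderOf_one_add_mul_prime_pow hp i hi0 hi v hv, Nat.add_sub_cancel]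
  refine Subgroup.eq_of_le_of_card_ge (Subgroup.zpowers_le.2 hker) ?_
  rw [Nat.card_zpowers, horder, card_ker_unitsMap_prime_pow hp (Nat.pos_of_ne_zero hi0) him]

lemma ker_unitsMap_le_zpowers (hp : p.Prime) {n m : ℕ} (hnm : n ≤ m) {a : (ZMod (p ^ m))ˣ}
    (ha : ZMod.unitsMap (pow_dvd_pow p hnm) a ^ (max p 3 - 1) ≠ 1) :
    (ZMod.unitsMap (pow_dvd_pow p hnm)).ker ≤ Subgroup.zpowers a := by
  have : NeZero p := ⟨hp.ne_zero⟩
  obtain ⟨A, hA⟩ := ZMod.natCast_zmod_surjective (a : ZMod (p ^ m))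
  have hn : 0 < n := by
    refine Nat.pos_of_ne_zero ?_
    rintro rfl
    exact ha (Subsingleton.elim (α := (ZMod 1)ˣ) _ _)
  have hpA : ¬ p ∣ A :=
    (ZMod.isUnit_natCast_iff_not_dvd_pow hp (hn.trans_le hnm)).1 (hA ▸ a.isUnit)
  have hpow : ((a ^ (max p 3 - 1) : (ZMod (p ^ m))ˣ) : ZMod (p ^ m)) =
      ((A : ℤ) ^ (max p 3 - 1) : ℤ) := by
    rw [Units.val_pow_eq_pow_val, ← hA, Int.cast_pow, Int.cast_natCast]
  rw [← map_pow, Ne, unitsMap_eq_one_iff_dvd_sub_one _ hpow, Nat.cast_pow] at ha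
  obtain ⟨i, hin, hi, v, hv, hAv⟩ :=
    exists_pow_max_sub_one_eq_one_add hp (by exact_mod_cast hpA) ha
  calc (ZMod.unitsMap (pow_dvd_pow p hnm)).ker
      ≤ (ZMod.unitsMap (pow_dvd_pow p (hin.le.trans hnm))).ker :=
        ker_unitsMap_le_ker_unitsMap_of_dvd (pow_dvd_pow p hin.le) (pow_dvd_pow p hnm)
    _ = Subgroup.zpowers (a ^ (max p 3 - 1)) :=
        (zpowers_eq_ker_unitsMap hp hi (hin.le.trans hnm) hv (hAv ▸ hpow)).symm
    _ ≤ Subgroup.zpowers a := Subgroup.zpowers_le.2 (Subgroup.npow_mem_zpowers a _)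

lemma natCast_mem_powers_of_le_of_max_le_orderOf (hp : p.Prime) {n m : ℕ} (hn : 0 < n)
    (hnm : n ≤ m) {a y : ℕ} (ha : ¬ p ∣ a) (hord : max p 3 ≤ orderOf (a : ZMod (p ^ n)))
    (hy : (y : ZMod (p ^ n)) ∈ Submonoid.powers (a : ZMod (p ^ n))) :
    (y : ZMod (p ^ m)) ∈ Submonoid.powers (a : ZMod (p ^ m)) := by
  have : NeZero p := ⟨hp.ne_zero⟩
  have isUnit_iff {c l : ℕ} (hl : 0 < l) : IsUnit (c : ZMod (p ^ l)) ↔ ¬ p ∣ c :=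
    ZMod.isUnit_natCast_iff_not_dvd_pow hp hl
  obtain ⟨k, hk⟩ := hy
  have hpy : ¬ p ∣ y := (isUnit_iff hn).1 (hk ▸ ((isUnit_iff hn).2 ha).pow k)
  obtain ⟨u, hu⟩ := (isUnit_iff (hn.trans_le hnm)).2 ha
  obtain ⟨w, hw⟩ := (isUnit_iff (hn.trans_le hnm)).2 hpy
  set f := ZMod.unitsMap (pow_dvd_pow p hnm)
  have hfu : (f u : ZMod (p ^ n)) = a := by
    rw [ZMod.unitsMap_val, hu, ZMod.cast_natCast (pow_dvd_pow p hnm)]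
  have hfw : (f w : ZMod (p ^ n)) = y := by
    rw [ZMod.unitsMap_val, hw, ZMod.cast_natCast (pow_dvd_pow p hnm)]
  have hker : f.ker ≤ Subgroup.zpowers u := by
    refine ker_unitsMap_le_zpowers hp hnm (pow_ne_one_of_lt_orderOf ?_ ?_)
    · omega
    · rw [← orderOf_units, hfu]
      omega
  have hmem : f w ∈ Subgroup.zpowers (f u) := by
    refine mem_powers_iff_mem_zpowers.1 ⟨k, Units.ext ?_⟩
    simpa only [Units.val_pow_eq_pow_val, hfu, hfw] using hk
  obtain ⟨j, hj⟩ := mem_powers_iff_mem_zpowers.2 (mem_zpowers_of_map_mem_zpowers hker hmem)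
  exact ⟨j, by simpa only [Units.val_pow_eq_pow_val, hu, hw] using congrArg Units.val hj⟩

lemma natCast_mem_powers_of_max_le_orderOf (hp : p.Prime) {n : ℕ} (hn : 0 < n) {a y : ℕ}
    (ha : ¬ p ∣ a) (hord : max p 3 ≤ orderOf (a : ZMod (p ^ n)))
    (hy : (y : ZMod (p ^ n)) ∈ Submonoid.powers (a : ZMod (p ^ n))) (m : ℕ) :
    (y : ZMod (p ^ m)) ∈ Submonoid.powers (a : ZMod (p ^ m)) := by
  rcases le_total n m with hnm | hmn
  · exact natCast_mem_powers_of_le_of_max_le_orderOf hp hn hnm ha hord hy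
  · exact natCast_mem_powers_of_dvd (pow_dvd_pow p hmn) hy

lemma isOfFinOrder_natCast_prime_pow (hp : p.Prime) {a : ℕ} (ha : ¬ p ∣ a) (m : ℕ) :
    IsOfFinOrder (a : ZMod (p ^ m)) := by
  have : NeZero p := ⟨hp.ne_zero⟩
  rw [isOfFinOrder_iff_isUnit, ZMod.isUnit_iff_coprime]
  exact (hp.coprime_iff_not_dvd.2 ha).symm.pow_right m

lemma hasBasis_nhds_padicTop (y : Np p) :
    (@nhds _ (padicTop p) y).HasBasis (fun _ : ℕ => True)
      fun m => {z | ∃ t : ℕ, (z : ℕ) = y + p ^ m * t} := by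
  set S : ℕ → Set (Np p) := fun m => {z | ∃ t : ℕ, (z : ℕ) = y + p ^ m * t}
  have hS : Antitone S := by
    rintro m l hml z ⟨t, ht⟩
    exact ⟨p ^ (l - m) * t, by rw [ht, ← mul_assoc, ← pow_add, Nat.add_sub_cancel' hml]⟩
  suffices h : @nhds _ (padicTop p) y = ⨅ m, Filter.principal (S m) from
    h ▸ Filter.hasBasis_iInf_principal hS.directed_ge
  rw [padicTop, nhds_generateFrom]
  apply le_antisymm
  · refine le_iInf fun m => iInf₂_le_of_le (S (m + 1)) ?_ (Filter.principal_mono.2 (hS m.le_succ))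
    exact ⟨⟨0, by simp⟩, y, m + 1, y.1.pos, m.succ_pos, rfl⟩
  · refine le_iInf₂ ?_
    rintro _ ⟨hy, x, n, -, -, rfl⟩
    obtain ⟨k, hk⟩ := hy
    refine iInf_le_of_le n (Filter.principal_mono.2 ?_)
    rintro z ⟨t, ht⟩
    exact ⟨k + t, by rw [ht, hk]; ring⟩

lemma mem_padicClosure_iff {A : Set ℕ+} {y : ℕ+} :
    y ∈ padicClosure p A ↔
      ¬ p ∣ (y : ℕ) ∧ ∀ m, ∃ z ∈ A, ¬ p ∣ (z : ℕ) ∧ ∃ t, (z : ℕ) = y + p ^ m * t := by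
  let _ := padicTop p
  constructor
  · rintro ⟨⟨y, hy⟩, hcl, rfl⟩
    refine ⟨hy, fun m => ?_⟩
    obtain ⟨⟨z, hz⟩, hzA, hzy⟩ :=
      (mem_closure_iff_nhds_basis (hasBasis_nhds_padicTop _)).1 hcl m trivial
    exact ⟨z, hzA, hz, hzy⟩
  · rintro ⟨hy, h⟩
    refine ⟨⟨y, hy⟩, (mem_closure_iff_nhds_basis (hasBasis_nhds_padicTop _)).2 fun m _ => ?_, rfl⟩
    obtain ⟨z, hzA, hz, hzy⟩ := h m
    exact ⟨⟨z, hz⟩, hzA, hzy⟩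

lemma mem_clPow_iff (hp : p.Prime) {a : ℕ} (ha : 1 < a) (hpa : ¬ p ∣ a) {y : ℕ+} :
    y ∈ clPow p a ↔ ∀ m, ((y : ℕ) : ZMod (p ^ m)) ∈ Submonoid.powers (a : ZMod (p ^ m)) := by
  rw [clPow, mem_padicClosure_iff]
  constructor
  · rintro ⟨-, h⟩ m
    obtain ⟨z, ⟨k, -, hzk⟩, -, t, hzt⟩ := h m
    refine ⟨k, ?_⟩
    have hcast := congrArg (Nat.cast : ℕ → ZMod (p ^ m)) (hzk.symm.trans hzt)
    rwa [Nat.cast_add, Nat.cast_mul, ZMod.natCast_self, zero_mul, add_zero, Nat.cast_pow] at hcast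
  · intro h
    have hpy : ¬ p ∣ (y : ℕ) := by
      obtain ⟨k, hk⟩ := h 1
      rw [← ZMod.isUnit_natCast_iff_not_dvd_pow hp one_pos] at hpa ⊢
      exact hk ▸ hpa.pow k
    refine ⟨hpy, fun m => ?_⟩
    -- a large exponent places `a ^ k` in the one-sided progression `y + p ^ m * ℕ₀`
    obtain ⟨k, hyk, hk⟩ :=
      exists_lt_pow_eq_of_mem_powers (isOfFinOrder_natCast_prime_pow hp hpa m) (h m) y
    have hle : (y : ℕ) ≤ a ^ k := (hyk.trans (Nat.lt_pow_self ha)).le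
    have hmod : (y : ℕ) ≡ a ^ k [MOD p ^ m] :=
      (ZMod.natCast_eq_natCast_iff _ _ _).1 (by exact_mod_cast hk.symm)
    obtain ⟨t, ht⟩ := (Nat.modEq_iff_dvd' hle).1 hmod
    exact ⟨⟨a ^ k, by positivity⟩, ⟨k, y.pos.trans hyk, rfl⟩, fun h => hpa (hp.dvd_of_dvd_pow h), t,
      by rw [PNat.mk_coe]; omega⟩

end PrimePower

/-- If `π_n(a)` has multiplicative order at least `max(p,3)` in `(ℤ/p^nℤ)ˣ`, then the
closure of `a^ℕ` in the `p`-adic topology on `ℕ \ pℕ` equals `ℕ ∩ π_n⁻¹(π_n(a)^ℕ)`. -/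
theorem clPow_eq_preimage_powers (p : ℕ) (hp : p.Prime) (a n : ℕ)
    (ha : 0 < a) (hpa : ¬ p ∣ a) (hn : 0 < n)
    (hord : max p 3 ≤ orderOf ((a : ZMod (p ^ n)))) :
    clPow p a = {y : ℕ+ | ∃ k : ℕ, 0 < k ∧
      ((y : ℕ) : ZMod (p ^ n)) = (a : ZMod (p ^ n)) ^ k} := by
  have ha_one : 1 < a := by
    by_contra h
    obtain rfl : a = 1 := by omega
    simp at hord
  ext y
  rw [mem_clPow_iff hp ha_one hpa]
  constructor
  · intro hy
    obtain ⟨k, hk, hyk⟩ :=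
      exists_lt_pow_eq_of_mem_powers (isOfFinOrder_natCast_prime_pow hp hpa n) (hy n) 0
    exact ⟨k, hk, hyk.symm⟩
  · rintro ⟨k, -, hyk⟩
    exact natCast_mem_powers_of_max_le_orderOf hp hn hpa hord ⟨k, hyk.symm⟩
end

section
/- Let p be an odd prime number, n ∈ ℕ, and a = 1+p^n. Then the closure of a^ℕ in the p-adic topology on ℕ \ pℕ equals 1+p^nℕ₀, and i(cl(a^ℕ)) = p^{n-1}(p-1). -/
/-!
Let `a = 1 + p ^ n * u` with `p ∤ u` and `2 < p ^ n`. Modulo `p ^ (d + n)` the progression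
`1 + p ^ n ℕ₀` has `p ^ d` residues, among them all powers of `a`, and `a` has multiplicative order
`p ^ d`; so the powers of `a` are all of these residues. As `a` is a unit modulo every `p ^ N`,
exponents can be enlarged at will without changing residues, so that membership in the closure of
`a ^ ℕ` is a matter of congruences alone, and the closure is `1 + p ^ n ℕ₀`.

The index needs no exact value of `n(X)` for `X = 1 + p ^ n ℕ₀`: saturation forces `n(X) = d + n`
for some `d`, and the index of `p ^ d` residues among the `p ^ (d + n - 1) * (p - 1)` units does not
depend on `d`.
-/

open TopologicalSpace

lemma mem_golombBasic {a b : ℕ} {x : ℕ+} :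
    x ∈ golombBasic a b ↔ a ≤ (x : ℕ) ∧ a ≡ x [MOD b] := by
  constructor
  · rintro ⟨k, hk⟩
    rw [hk]
    exact ⟨Nat.le_add_right _ _, by simp⟩
  · rintro ⟨hle, hmod⟩
    exact (Nat.modEq_iff_exists_eq_add hle).1 hmod

lemma mem_golombBasic_one {b : ℕ} {x : ℕ+} : x ∈ golombBasic 1 b ↔ 1 ≡ x [MOD b] :=
  mem_golombBasic.trans (and_iff_right x.pos)

lemma hasBasis_nhds_padicTop_s12 (p : ℕ) (y : Np p) :
    (@nhds _ (padicTop p) y).HasBasis (fun _ : ℕ ↦ True)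
      fun N ↦ {z : Np p | z.1 ∈ golombBasic y.1 (p ^ N)} := by
  have nhds_eq : @nhds _ (padicTop p) y =
      ⨅ N : ℕ, Filter.principal {z : Np p | z.1 ∈ golombBasic y.1 (p ^ N)} := by
    rw [padicTop, nhds_generateFrom]
    apply le_antisymm
    · refine le_iInf fun N ↦ iInf₂_le_of_le {z : Np p | z.1 ∈ golombBasic y.1 (p ^ (N + 1))}
        ⟨⟨0, rfl⟩, y.1, N + 1, y.1.pos, N.succ_pos, rfl⟩ (Filter.principal_mono.2 ?_)
      rintro z ⟨k, hk⟩
      exact ⟨p * k, by rw [hk]; ring⟩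
    · refine le_iInf₂ ?_
      rintro _ ⟨hy, x, N, -, -, rfl⟩
      obtain ⟨i, hi⟩ := hy
      refine iInf_le_of_le N (Filter.principal_mono.2 ?_)
      rintro z ⟨k, hk⟩
      exact ⟨i + k, by rw [hk, hi]; ring⟩
  rw [nhds_eq]
  refine Filter.hasBasis_iInf_principal (directed_of_isDirected_le fun M N hMN z hz ↦ ?_)
  obtain ⟨hle, hmod⟩ := mem_golombBasic.1 hz
  exact mem_golombBasic.2 ⟨hle, hmod.of_dvd (pow_dvd_pow p hMN)⟩

lemma mem_padicClosure {p : ℕ} {A : Set ℕ+} {y : ℕ+} :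
    y ∈ padicClosure p A ↔ ¬ p ∣ y ∧ ∀ N, ∃ z ∈ A, z ∈ golombBasic y (p ^ N) := by
  let := padicTop p
  constructor
  · rintro ⟨y, hy, rfl⟩
    refine ⟨y.2, fun N ↦ ?_⟩
    obtain ⟨z, hzA, hz⟩ :=
      (mem_closure_iff_nhds_basis (hasBasis_nhds_padicTop_s12 p y)).1 hy N trivial
    exact ⟨z, hzA, hz⟩
  · rintro ⟨hpy, hA⟩
    refine ⟨⟨y, hpy⟩, (mem_closure_iff_nhds_basis (hasBasis_nhds_padicTop_s12 p _)).2 fun N _ ↦ ?_, rfl⟩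
    obtain ⟨z, hzA, k, hk⟩ := hA (N + 1)
    have hpz : ¬ p ∣ z := by
      rwa [hk, Nat.dvd_add_left ((dvd_pow_self p N.succ_ne_zero).mul_right k)]
    exact ⟨⟨z, hpz⟩, hzA, p * k, by rw [hk]; ring⟩

lemma exists_le_pow_modEq {a m : ℕ} (ham : a.Coprime m) (hm : 0 < m) (e B : ℕ) :
    ∃ f, B ≤ f ∧ a ^ f ≡ a ^ e [MOD m] := by
  refine ⟨e + m.totient * B, ?_, ?_⟩
  · exact le_add_left (Nat.le_mul_of_pos_left B (Nat.totient_pos.2 hm))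
  · simpa only [pow_add, pow_mul, one_pow, mul_one] using
      ((Nat.ModEq.pow_totient ham).pow B).mul_left (a ^ e)

lemma mem_clPow {p a : ℕ} (hp : p.Prime) (ha : 1 < a) (hpa : ¬ p ∣ a) {y : ℕ+} :
    y ∈ clPow p a ↔ ∀ N, ∃ e, a ^ e ≡ y [MOD p ^ N] := by
  rw [clPow, mem_padicClosure]
  constructor
  · rintro ⟨-, hy⟩ N
    obtain ⟨z, ⟨e, -, hz⟩, hyz⟩ := hy N
    exact ⟨e, hz ▸ (mem_golombBasic.1 hyz).2.symm⟩
  · intro hy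
    constructor
    · obtain ⟨e, he⟩ := hy 1
      rw [← he.dvd_iff (by rw [pow_one])]
      exact fun h ↦ hpa (hp.dvd_of_dvd_pow h)
    · intro N
      obtain ⟨e, he⟩ := hy N
      have hcop : a.Coprime (p ^ N) := ((hp.coprime_iff_not_dvd.2 hpa).pow_left N).symm
      obtain ⟨f, hyf, hf⟩ := exists_le_pow_modEq hcop (pow_pos hp.pos N) e y
      have hle : (y : ℕ) ≤ a ^ f := hyf.trans (Nat.lt_pow_self ha).le
      exact ⟨⟨a ^ f, y.pos.trans_le hle⟩, ⟨f, y.pos.trans_le hyf, rfl⟩,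
        mem_golombBasic.2 ⟨hle, (hf.trans he).symm⟩⟩

lemma pin_golombBasic {p c : ℕ} (hp : 0 < p) (hc : 0 < c) (n d : ℕ) :
    pin p (d + n) (golombBasic c (p ^ n)) =
      (fun j : ℕ ↦ ((c + p ^ n * j : ℕ) : ZMod (p ^ (d + n)))) '' Set.Iio (p ^ d) := by
  ext x
  constructor
  · rintro ⟨y, ⟨k, hk⟩, rfl⟩
    refine ⟨k % p ^ d, Nat.mod_lt _ (pow_pos hp d), ?_⟩
    simp only [hk, ZMod.natCast_eq_natCast_iff, add_comm d n, pow_add]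
    exact ((Nat.mod_modEq k (p ^ d)).mul_left' _).add_left c
  · rintro ⟨j, -, rfl⟩
    exact ⟨⟨c + p ^ n * j, by positivity⟩, ⟨j, rfl⟩, rfl⟩

lemma ncard_pin_golombBasic {p c : ℕ} (hp : 0 < p) (hc : 0 < c) (n d : ℕ) :
    (pin p (d + n) (golombBasic c (p ^ n))).ncard = p ^ d := by
  rw [pin_golombBasic hp hc, Set.InjOn.ncard_image, Set.ncard_Iio_nat]
  intro i hi j hj hij
  simp only [ZMod.natCast_eq_natCast_iff, add_comm d n, pow_add] at hij
  have hmod : i ≡ j [MOD p ^ d] :=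
    (hij.add_left_cancel' c).mul_left_cancel' (pow_pos hp n).ne'
  exact hmod.eq_of_lt_of_lt hi hj

lemma one_modEq_one_add_mul_pow (b u e : ℕ) : 1 ≡ (1 + b * u) ^ e [MOD b] := by
  have hbase : 1 ≡ 1 + b * u [MOD b] := by simp
  simpa only [one_pow] using hbase.pow e

lemma ncard_powers_eq_orderOf {M : Type*} [Monoid M] {a : M} (ha : IsOfFinOrder a) :
    (Submonoid.powers a : Set M).ncard = orderOf a := by
  rw [← Nat.card_fin (orderOf a), ← Nat.card_coe_set_eq]
  exact Nat.card_congr (finEquivPowers ha).symm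

lemma orderOf_one_add_pow_mul {p n u : ℕ} (hp : p.Prime) (hpn : 2 < p ^ n) (hu : ¬ p ∣ u) (d : ℕ) :
    orderOf ((1 + p ^ n * u : ℕ) : ZMod (p ^ (d + n))) = p ^ d := by
  have hn : n ≠ 0 := by rintro rfl; simp at hpn
  have hnp : n + 2 ≤ p * n := by
    rcases hp.two_le.eq_or_lt with rfl | hp3
    · have : n ≠ 1 := by rintro rfl; simp at hpn
      lia
    · nlinarith [Nat.pos_of_ne_zero hn]
  simpa using ZMod.orderOf_one_add_mul_prime_pow hp n hn hnp u (by exact_mod_cast hu) d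

lemma coe_powers_one_add_pow_mul {p n u : ℕ} (hp : p.Prime) (hpn : 2 < p ^ n) (hu : ¬ p ∣ u)
    (d : ℕ) :
    (Submonoid.powers ((1 + p ^ n * u : ℕ) : ZMod (p ^ (d + n))) : Set (ZMod (p ^ (d + n)))) =
      pin p (d + n) (golombBasic 1 (p ^ n)) := by
  have : NeZero p := ⟨hp.ne_zero⟩
  set a : ZMod (p ^ (d + n)) := ((1 + p ^ n * u : ℕ) : ZMod (p ^ (d + n))) with ha
  have horder : orderOf a = p ^ d := orderOf_one_add_pow_mul hp hpn hu d
  have hfin : IsOfFinOrder a := orderOf_pos_iff.1 (horder ▸ pow_pos hp.pos d)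
  have hsubset : (Submonoid.powers a : Set (ZMod (p ^ (d + n)))) ⊆
      pin p (d + n) (golombBasic 1 (p ^ n)) := by
    rintro _ ⟨e, rfl⟩
    exact ⟨⟨(1 + p ^ n * u) ^ e, by positivity⟩,
      mem_golombBasic_one.2 (one_modEq_one_add_mul_pow _ u e), by simp [ha]⟩
  refine Set.eq_of_subset_of_ncard_le hsubset ?_
  rw [ncard_pin_golombBasic hp.pos one_pos, ncard_powers_eq_orderOf hfin, horder]

lemma clPow_one_add_pow_mul {p n u : ℕ} (hp : p.Prime) (hpn : 2 < p ^ n) (hu : ¬ p ∣ u) :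
    clPow p (1 + p ^ n * u) = golombBasic 1 (p ^ n) := by
  have hn : n ≠ 0 := by rintro rfl; simp at hpn
  have hpa : ¬ p ∣ 1 + p ^ n * u := by
    rw [Nat.dvd_add_left ((dvd_pow_self p hn).mul_right u)]
    exact hp.not_dvd_one
  have hu_pos : 0 < u := Nat.pos_of_ne_zero fun h ↦ hu (h ▸ dvd_zero p)
  ext y
  rw [mem_clPow hp (by simp [hp.pos, hu_pos]) hpa, mem_golombBasic_one]
  constructor
  · intro hy
    obtain ⟨e, he⟩ := hy n
    exact (one_modEq_one_add_mul_pow _ u e).trans he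
  · intro hy N
    have hmem : ((y : ℕ) : ZMod (p ^ (N + n))) ∈ pin p (N + n) (golombBasic 1 (p ^ n)) :=
      ⟨y, mem_golombBasic_one.2 hy, rfl⟩
    rw [← coe_powers_one_add_pow_mul hp hpn hu] at hmem
    obtain ⟨e, he⟩ := hmem
    refine ⟨e, Nat.ModEq.of_dvd (pow_dvd_pow p (N.le_add_right n)) ?_⟩
    rw [← ZMod.natCast_eq_natCast_iff, Nat.cast_pow]
    exact he

lemma golombBasic_one_eq_preimage_pin_iff {p m n : ℕ} (hp : 1 < p) :
    golombBasic 1 (p ^ n) =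
      {y : ℕ+ | ((y : ℕ) : ZMod (p ^ m)) ∈ pin p m (golombBasic 1 (p ^ n))} ↔ n ≤ m := by
  constructor
  · intro hsat
    have hmem : (⟨1 + p ^ m, by positivity⟩ : ℕ+) ∈ golombBasic 1 (p ^ n) := by
      rw [hsat]
      exact ⟨1, ⟨0, rfl⟩, (ZMod.natCast_eq_natCast_iff _ _ _).2 (by simp)⟩
    have hdvd : p ^ n ∣ p ^ m := Nat.left_modEq_add_iff.1 (mem_golombBasic_one.1 hmem)
    exact (Nat.pow_dvd_pow_iff_le_right hp).1 hdvd
  · intro hnm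
    refine Set.Subset.antisymm (fun y hy ↦ ⟨y, hy, rfl⟩) ?_
    rintro y ⟨z, hz, hzy⟩
    have hmod : z ≡ y [MOD p ^ m] := (ZMod.natCast_eq_natCast_iff _ _ _).1 hzy
    exact mem_golombBasic_one.2
      ((mem_golombBasic_one.1 hz).trans (hmod.of_dvd (pow_dvd_pow p hnm)))

lemma le_nX_golombBasic_one {p : ℕ} (hp : 1 < p) (n : ℕ) :
    n ≤ nX p (golombBasic 1 (p ^ n)) := by
  have hcard : max p 3 ≤ (pin p (2 + n) (golombBasic 1 (p ^ n))).ncard := by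
    rw [ncard_pin_golombBasic (by lia) one_pos]
    exact max_le (by nlinarith) (by nlinarith)
  have hmem := Nat.sInf_mem (s := {m : ℕ | 0 < m ∧ golombBasic 1 (p ^ n) =
      {y : ℕ+ | ((y : ℕ) : ZMod (p ^ m)) ∈ pin p m (golombBasic 1 (p ^ n))} ∧
      max p 3 ≤ (pin p m (golombBasic 1 (p ^ n))).ncard})
    ⟨2 + n, by lia, (golombBasic_one_eq_preimage_pin_iff hp).2 (by lia), hcard⟩
  exact (golombBasic_one_eq_preimage_pin_iff hp).1 hmem.2.1

lemma iX_golombBasic_one {p n : ℕ} (hp : p.Prime) (hn : 0 < n) :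
    iX p (golombBasic 1 (p ^ n)) = p ^ (n - 1) * (p - 1) := by
  have : NeZero p := ⟨hp.ne_zero⟩
  obtain ⟨d, hd⟩ := Nat.exists_eq_add_of_le' (le_nX_golombBasic_one hp.one_lt n)
  have hunits : Nat.card (ZMod (p ^ (d + n)))ˣ = p ^ d * (p ^ (n - 1) * (p - 1)) := by
    rw [Nat.card_eq_fintype_card, ZMod.card_units_eq_totient,
      Nat.totient_prime_pow hp (by lia), Nat.add_sub_assoc hn, pow_add, mul_assoc]
  rw [iX, hd, hunits, ncard_pin_golombBasic hp.pos one_pos,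
    Nat.mul_div_cancel_left _ (pow_pos hp.pos d)]

theorem clPow_one_add_pow_general {p n u : ℕ} (hp : p.Prime) (hpn : 2 < p ^ n) (hu : ¬ p ∣ u) :
    clPow p (1 + p ^ n * u) = golombBasic 1 (p ^ n) ∧
    iX p (clPow p (1 + p ^ n * u)) = p ^ (n - 1) * (p - 1) := by
  have hn : 0 < n := Nat.pos_of_ne_zero (by rintro rfl; simp at hpn)
  rw [clPow_one_add_pow_mul hp hpn hu]
  exact ⟨rfl, iX_golombBasic_one hp hn⟩

/-- For an odd prime `p`, `n ∈ ℕ` and `a = 1 + p^n`, the closure of `a^ℕ` in the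
`p`-adic topology on `ℕ \ pℕ` equals `1 + p^nℕ₀`, and `i(cl(a^ℕ)) = p^{n-1}(p-1)`. -/
theorem clPow_one_add_pow (p : ℕ) (hp : p.Prime) (hodd : p ≠ 2) (n : ℕ) (hn : 0 < n) :
    clPow p (1 + p ^ n) = golombBasic 1 (p ^ n) ∧
    iX p (clPow p (1 + p ^ n)) = p ^ (n - 1) * (p - 1) := by
  have hpn : 2 < p ^ n := (hp.two_le.lt_of_ne' hodd).trans_le (Nat.le_self_pow hn.ne' p)
  simpa only [mul_one] using clPow_one_add_pow_general hp hpn hp.not_dvd_one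
end
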